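/- Let β > 1. Then there is a constant C = C(β) such that for every t ≥ 0 and every compactly supported C¹ function u : ℝ² → ℝ: ∫_{|x| ≥ t} u(x)² (1+|x|−t)^{β−2} dx ≤ C ∫_{|x| ≥ t} ( (x/|x|)·∇u(x) )² (1+|x|−t)^β dx. -/

import Mathlib

open MeasureTheory

noncomputable section

/-!
Along each ray the function `r ↦ r ^ (d - 1) * u ^ 2 * (s + r) ^ (β - 1)` vanishes for large `r`
and is nonnegative at `r = a`, so the integral of its derivative over `(a, ∞)` is at most `0`. That
derivative contains `(β - 1) * r ^ (d - 1) * u ^ 2 * (s + r) ^ (β - 2)`, the integrand to be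
bounded; the term where `r ^ (d - 1)` is differentiated has a favourable sign, and the cross term
`2 u ∂ᵣu` is absorbed by completing a square, which produces the constant `(2 / (β - 1)) ^ 2`.
Integrating over the unit sphere gives the inequality on the exterior of a ball, in any positive
dimension and for any norm.
-/

open Set Filter Metric Module
open scoped ENNReal

section OneDimensional

variable {β s a b : ℝ} {ρ ρ' v v' : ℝ → ℝ}

/-- The last bracket is the derivative of `p * (y ^ 2 * w ^ (β - 1))` when `p`, `y`, `w` have
derivatives `p'`, `y'`, `1`. -/
lemma mul_sq_mul_rpow_le_add_deriv {w p p' y y' : ℝ} (hβ : 1 < β) (hw : 0 < w) (hp : 0 ≤ p)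
    (hp' : 0 ≤ p') :
    p * (y ^ 2 * w ^ (β - 2)) ≤ (2 / (β - 1)) ^ 2 * (p * (y' ^ 2 * w ^ β)) +
      2 / (β - 1) * (p' * (y ^ 2 * w ^ (β - 1)) +
        p * (2 * y * y' * w ^ (β - 1) + y ^ 2 * ((β - 1) * w ^ (β - 2)))) := by
  have hβ' : 0 < β - 1 := sub_pos.2 hβ
  have rpow_sub_one : w ^ (β - 1) = w ^ (β - 2) * w := by
    rw [← Real.rpow_add_one hw.ne']; ring_nf
  have rpow_self : w ^ β = w ^ (β - 2) * w ^ 2 := by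
    rw [← Real.rpow_add_natCast hw.ne']; ring_nf
  have completed_square : 0 ≤ p * w ^ (β - 2) * (y + 2 / (β - 1) * y' * w) ^ 2 +
      2 / (β - 1) * (p' * (y ^ 2 * (w ^ (β - 2) * w))) := by positivity
  rw [rpow_sub_one, rpow_self, ← sub_nonneg]
  convert completed_square using 1
  field_simp
  ring

lemma hasDerivAt_mul_sq_mul_add_rpow {r : ℝ} (hr : 0 < s + r) (hρ : HasDerivAt ρ (ρ' r) r)
    (hv : HasDerivAt v (v' r) r) :
    HasDerivAt (fun r ↦ ρ r * (v r ^ 2 * (s + r) ^ (β - 1)))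
      (ρ' r * (v r ^ 2 * (s + r) ^ (β - 1)) + ρ r * (2 * v r * v' r * (s + r) ^ (β - 1) +
        v r ^ 2 * ((β - 1) * (s + r) ^ (β - 2)))) r := by
  have hw : HasDerivAt (fun r ↦ (s + r) ^ (β - 1)) (1 * (β - 1) * (s + r) ^ (β - 1 - 1)) r :=
    ((hasDerivAt_id r).const_add s).rpow_const (Or.inl hr.ne')
  refine (hρ.mul ((hv.pow 2).mul hw)).congr_deriv ?_
  simp only [Pi.mul_apply, Pi.pow_apply, show β - 1 - 1 = β - 2 by ring]
  ring

lemma continuousOn_add_rpow_const (hs : 0 < s + a) (p : ℝ) :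
    ContinuousOn (fun r : ℝ ↦ (s + r) ^ p) (Icc a b) :=
  (by fun_prop : ContinuousOn (fun r : ℝ ↦ s + r) (Icc a b)).rpow_const fun r hr ↦
    Or.inl (by linarith [hr.1])

lemma continuousOn_mul_sq_mul_add_rpow (hs : 0 < s + a) (hρ : ContinuousOn ρ (Icc a b))
    (hv : ContinuousOn v (Icc a b)) (p : ℝ) :
    ContinuousOn (fun r ↦ ρ r * (v r ^ 2 * (s + r) ^ p)) (Icc a b) :=
  hρ.mul ((hv.pow 2).mul (continuousOn_add_rpow_const hs p))

lemma continuousOn_deriv_mul_sq_mul_add_rpow (hs : 0 < s + a) (hρ : ContinuousOn ρ (Icc a b))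
    (hρ' : ContinuousOn ρ' (Icc a b)) (hv : ContinuousOn v (Icc a b))
    (hv' : ContinuousOn v' (Icc a b)) :
    ContinuousOn (fun r ↦ ρ' r * (v r ^ 2 * (s + r) ^ (β - 1)) +
      ρ r * (2 * v r * v' r * (s + r) ^ (β - 1) + v r ^ 2 * ((β - 1) * (s + r) ^ (β - 2))))
      (Icc a b) := by
  have hw₁ : ContinuousOn (fun r ↦ (s + r) ^ (β - 1)) (Icc a b) := continuousOn_add_rpow_const hs _
  have hw₂ : ContinuousOn (fun r ↦ (s + r) ^ (β - 2)) (Icc a b) := continuousOn_add_rpow_const hs _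
  fun_prop

lemma integral_deriv_mul_sq_mul_add_rpow_nonpos (hs : 0 < s + a) (hab : a ≤ b)
    (hρ : ∀ r ∈ Icc a b, HasDerivAt ρ (ρ' r) r) (hρ'c : ContinuousOn ρ' (Icc a b))
    (hρa : 0 ≤ ρ a)
    (hv : ∀ r ∈ Icc a b, HasDerivAt v (v' r) r) (hv'c : ContinuousOn v' (Icc a b))
    (hvb : v b = 0) :
    ∫ r in a..b, (ρ' r * (v r ^ 2 * (s + r) ^ (β - 1)) +
      ρ r * (2 * v r * v' r * (s + r) ^ (β - 1) +
        v r ^ 2 * ((β - 1) * (s + r) ^ (β - 2)))) ≤ 0 := by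
  have hderiv : ∀ r ∈ uIcc a b, HasDerivAt (fun r ↦ ρ r * (v r ^ 2 * (s + r) ^ (β - 1))) _ r :=
    fun r hr ↦ by
      rw [uIcc_of_le hab] at hr
      exact hasDerivAt_mul_sq_mul_add_rpow (by linarith [hr.1]) (hρ r hr) (hv r hr)
  rw [intervalIntegral.integral_eq_sub_of_hasDerivAt hderiv
    ((continuousOn_deriv_mul_sq_mul_add_rpow hs (HasDerivAt.continuousOn hρ) hρ'c
      (HasDerivAt.continuousOn hv) hv'c).intervalIntegrable_of_Icc hab), hvb]
  have : 0 ≤ ρ a * (v a ^ 2 * (s + a) ^ (β - 1)) := by positivity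
  simpa using this

lemma integral_mul_sq_mul_add_rpow_le (hβ : 1 < β) (hs : 0 < s + a) (hab : a ≤ b)
    (hρ : ∀ r ∈ Icc a b, HasDerivAt ρ (ρ' r) r) (hρ'c : ContinuousOn ρ' (Icc a b))
    (hρ0 : ∀ r ∈ Icc a b, 0 ≤ ρ r) (hρ'0 : ∀ r ∈ Icc a b, 0 ≤ ρ' r)
    (hv : ∀ r ∈ Icc a b, HasDerivAt v (v' r) r) (hv'c : ContinuousOn v' (Icc a b))
    (hvb : v b = 0) :
    ∫ r in a..b, ρ r * (v r ^ 2 * (s + r) ^ (β - 2)) ≤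
      (2 / (β - 1)) ^ 2 * ∫ r in a..b, ρ r * (v' r ^ 2 * (s + r) ^ β) := by
  have hρc : ContinuousOn ρ (Icc a b) := HasDerivAt.continuousOn hρ
  have hvc : ContinuousOn v (Icc a b) := HasDerivAt.continuousOn hv
  let F' r := ρ' r * (v r ^ 2 * (s + r) ^ (β - 1)) +
    ρ r * (2 * v r * v' r * (s + r) ^ (β - 1) + v r ^ 2 * ((β - 1) * (s + r) ^ (β - 2)))
  have hF'i : IntervalIntegrable F' volume a b :=
    (continuousOn_deriv_mul_sq_mul_add_rpow hs hρc hρ'c hvc hv'c).intervalIntegrable_of_Icc hab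
  have hli := (continuousOn_mul_sq_mul_add_rpow hs hρc hvc (β - 2)).intervalIntegrable_of_Icc
    (μ := volume) hab
  have hri := (continuousOn_mul_sq_mul_add_rpow hs hρc hv'c β).intervalIntegrable_of_Icc
    (μ := volume) hab
  calc ∫ r in a..b, ρ r * (v r ^ 2 * (s + r) ^ (β - 2))
      ≤ ∫ r in a..b, ((2 / (β - 1)) ^ 2 * (ρ r * (v' r ^ 2 * (s + r) ^ β)) +
          2 / (β - 1) * F' r) :=
        intervalIntegral.integral_mono_on hab hli ((hri.const_mul _).add (hF'i.const_mul _))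
          fun r hr ↦ mul_sq_mul_rpow_le_add_deriv hβ (by linarith [hr.1]) (hρ0 r hr) (hρ'0 r hr)
    _ = (2 / (β - 1)) ^ 2 * (∫ r in a..b, ρ r * (v' r ^ 2 * (s + r) ^ β)) +
          2 / (β - 1) * ∫ r in a..b, F' r := by
        rw [intervalIntegral.integral_add (hri.const_mul _) (hF'i.const_mul _),
          intervalIntegral.integral_const_mul, intervalIntegral.integral_const_mul]
    _ ≤ (2 / (β - 1)) ^ 2 * ∫ r in a..b, ρ r * (v' r ^ 2 * (s + r) ^ β) :=
        add_le_of_nonpos_right <|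
          mul_nonpos_of_nonneg_of_nonpos (div_pos two_pos (sub_pos.2 hβ)).le <|
          integral_deriv_mul_sq_mul_add_rpow_nonpos hs hab hρ hρ'c
            (hρ0 a (left_mem_Icc.2 hab)) hv hv'c hvb

lemma ofReal_intervalIntegral_eq_setLIntegral_ofReal {f : ℝ → ℝ} (hab : a ≤ b)
    (hf : ContinuousOn f (Icc a b)) (hf0 : ∀ r ∈ Icc a b, 0 ≤ f r) :
    ENNReal.ofReal (∫ r in a..b, f r) = ∫⁻ r in Ioc a b, ENNReal.ofReal (f r) := by
  rw [intervalIntegral.integral_of_le hab]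
  refine ofReal_integral_eq_lintegral_ofReal (hf.integrableOn_Icc.mono_set Ioc_subset_Icc_self) ?_
  filter_upwards [ae_restrict_mem measurableSet_Ioc] with r hr
  exact hf0 r (Ioc_subset_Icc_self hr)

lemma setLIntegral_Ioc_mul_sq_mul_add_rpow_le (hβ : 1 < β) (hs : 0 < s + a) (hab : a ≤ b)
    (hρ : ∀ r ∈ Icc a b, HasDerivAt ρ (ρ' r) r) (hρ'c : ContinuousOn ρ' (Icc a b))
    (hρ0 : ∀ r ∈ Icc a b, 0 ≤ ρ r) (hρ'0 : ∀ r ∈ Icc a b, 0 ≤ ρ' r)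
    (hv : ∀ r ∈ Icc a b, HasDerivAt v (v' r) r) (hv'c : ContinuousOn v' (Icc a b))
    (hvb : v b = 0) :
    ∫⁻ r in Ioc a b, ENNReal.ofReal (ρ r * (v r ^ 2 * (s + r) ^ (β - 2))) ≤
      ENNReal.ofReal ((2 / (β - 1)) ^ 2) *
        ∫⁻ r in Ioc a b, ENNReal.ofReal (ρ r * (v' r ^ 2 * (s + r) ^ β)) := by
  have hρc : ContinuousOn ρ (Icc a b) := HasDerivAt.continuousOn hρ
  have hvc : ContinuousOn v (Icc a b) := HasDerivAt.continuousOn hv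
  have hnonneg (y p r : ℝ) (hr : r ∈ Icc a b) : 0 ≤ ρ r * (y ^ 2 * (s + r) ^ p) :=
    mul_nonneg (hρ0 r hr) (mul_nonneg (sq_nonneg y) (Real.rpow_nonneg (by linarith [hr.1]) p))
  rw [← ofReal_intervalIntegral_eq_setLIntegral_ofReal hab
      (continuousOn_mul_sq_mul_add_rpow hs hρc hvc _) (fun r ↦ hnonneg _ _ r),
    ← ofReal_intervalIntegral_eq_setLIntegral_ofReal hab
      (continuousOn_mul_sq_mul_add_rpow hs hρc hv'c _) (fun r ↦ hnonneg _ _ r),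
    ← ENNReal.ofReal_mul (sq_nonneg _)]
  exact ENNReal.ofReal_le_ofReal
    (integral_mul_sq_mul_add_rpow_le hβ hs hab hρ hρ'c hρ0 hρ'0 hv hv'c hvb)

lemma setLIntegral_Ioi_mul_sq_mul_add_rpow_le (hβ : 1 < β) (hs : 0 < s + a)
    (hρ : ∀ r ∈ Ici a, HasDerivAt ρ (ρ' r) r) (hρ'c : ContinuousOn ρ' (Ici a))
    (hρ0 : ∀ r ∈ Ici a, 0 ≤ ρ r) (hρ'0 : ∀ r ∈ Ici a, 0 ≤ ρ' r)
    (hv : ∀ r ∈ Ici a, HasDerivAt v (v' r) r) (hv'c : ContinuousOn v' (Ici a))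
    (hv0 : ∀ᶠ r in atTop, v r = 0) :
    ∫⁻ r in Ioi a, ENNReal.ofReal (ρ r * (v r ^ 2 * (s + r) ^ (β - 2))) ≤
      ENNReal.ofReal ((2 / (β - 1)) ^ 2) *
        ∫⁻ r in Ioi a, ENNReal.ofReal (ρ r * (v' r ^ 2 * (s + r) ^ β)) := by
  obtain ⟨b, hvb, hab⟩ := ((eventually_forall_ge_atTop.2 hv0).and (eventually_ge_atTop a)).exists
  have htail : EqOn (fun r ↦ ENNReal.ofReal (ρ r * (v r ^ 2 * (s + r) ^ (β - 2)))) 0 (Ioi b) :=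
    fun r hr ↦ by simp [hvb r (le_of_lt hr)]
  have hIcc : Icc a b ⊆ Ici a := Icc_subset_Ici_self
  calc ∫⁻ r in Ioi a, ENNReal.ofReal (ρ r * (v r ^ 2 * (s + r) ^ (β - 2)))
      = ∫⁻ r in Ioc a b, ENNReal.ofReal (ρ r * (v r ^ 2 * (s + r) ^ (β - 2))) := by
        rw [← Ioc_union_Ioi_eq_Ioi hab, lintegral_union measurableSet_Ioi
          (Ioc_disjoint_Ioi le_rfl), setLIntegral_eq_zero measurableSet_Ioi htail, add_zero]
    _ ≤ ENNReal.ofReal ((2 / (β - 1)) ^ 2) *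
          ∫⁻ r in Ioc a b, ENNReal.ofReal (ρ r * (v' r ^ 2 * (s + r) ^ β)) :=
        setLIntegral_Ioc_mul_sq_mul_add_rpow_le hβ hs hab (fun r hr ↦ hρ r (hIcc hr))
          (hρ'c.mono hIcc) (fun r hr ↦ hρ0 r (hIcc hr)) (fun r hr ↦ hρ'0 r (hIcc hr))
          (fun r hr ↦ hv r (hIcc hr)) (hv'c.mono hIcc) (hvb b le_rfl)
    _ ≤ ENNReal.ofReal ((2 / (β - 1)) ^ 2) *
          ∫⁻ r in Ioi a, ENNReal.ofReal (ρ r * (v' r ^ 2 * (s + r) ^ β)) := by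
        gcongr
        exact Ioc_subset_Ioi_self

end OneDimensional

section Polar

variable {E : Type*} [NormedAddCommGroup E] [NormedSpace ℝ E] [FiniteDimensional ℝ E]
  [Nontrivial E] [MeasurableSpace E] [BorelSpace E] (μ : Measure E) [μ.IsAddHaarMeasure]
  {f : E → ℝ≥0∞}

lemma lintegral_eq_lintegral_toSphere_lintegral_Ioi (hf : Measurable f) :
    ∫⁻ x, f x ∂μ = ∫⁻ ω, (∫⁻ r in Ioi (0 : ℝ),
      ENNReal.ofReal (r ^ (finrank ℝ E - 1)) * f (r • (ω : E))) ∂μ.toSphere := by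
  have hfr : Measurable fun p : sphere (0 : E) 1 × Ioi (0 : ℝ) ↦ f ((p.2 : ℝ) • (p.1 : E)) :=
    hf.comp (by fun_prop)
  have hray (ω : sphere (0 : E) 1) : Measurable fun r : Ioi (0 : ℝ) ↦ f ((r : ℝ) • (ω : E)) :=
    hf.comp (by fun_prop)
  calc ∫⁻ x, f x ∂μ
      = ∫⁻ x : ({0}ᶜ : Set E), f x ∂(μ.comap (↑)) := by
        rw [lintegral_subtype_comap (measurableSet_singleton _).compl, restrict_compl_singleton]
    _ = ∫⁻ p, f ((p.2 : ℝ) • (p.1 : E)) ∂(μ.toSphere.prod (.volumeIoiPow (finrank ℝ E - 1))) := by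
        rw [← μ.measurePreserving_homeomorphUnitSphereProd.lintegral_comp hfr]
        refine lintegral_congr fun x ↦ ?_
        rw [← homeomorphUnitSphereProd_symm_apply_coe, Homeomorph.symm_apply_apply]
    _ = ∫⁻ ω, ∫⁻ r : Ioi (0 : ℝ), f ((r : ℝ) • (ω : E)) ∂(.volumeIoiPow (finrank ℝ E - 1))
          ∂μ.toSphere := lintegral_prod _ hfr.aemeasurable
    _ = _ := by
        refine lintegral_congr fun ω ↦ ?_
        rw [Measure.volumeIoiPow, lintegral_withDensity_eq_lintegral_mul _ (by fun_prop) (hray ω)]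
        exact lintegral_subtype_comap measurableSet_Ioi fun r : ℝ ↦
          ENNReal.ofReal (r ^ (finrank ℝ E - 1)) * f (r • (ω : E))

lemma setLIntegral_norm_ge_eq_lintegral_toSphere_lintegral_Ioi (hf : Measurable f) {a : ℝ}
    (ha : 0 ≤ a) :
    ∫⁻ x in {x | a ≤ ‖x‖}, f x ∂μ = ∫⁻ ω, (∫⁻ r in Ioi a,
      ENNReal.ofReal (r ^ (finrank ℝ E - 1)) * f (r • (ω : E))) ∂μ.toSphere := by
  have hS : MeasurableSet {x : E | a ≤ ‖x‖} := measurableSet_le measurable_const measurable_norm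
  rw [← lintegral_indicator hS,
    lintegral_eq_lintegral_toSphere_lintegral_Ioi μ (hf.indicator hS)]
  refine lintegral_congr fun ω ↦ ?_
  calc ∫⁻ r in Ioi (0 : ℝ), ENNReal.ofReal (r ^ (finrank ℝ E - 1)) *
        {x | a ≤ ‖x‖}.indicator f (r • (ω : E))
      = ∫⁻ r in Ioi (0 : ℝ), (Ici a).indicator
          (fun r ↦ ENNReal.ofReal (r ^ (finrank ℝ E - 1)) * f (r • (ω : E))) r := by
        refine setLIntegral_congr_fun measurableSet_Ioi fun r hr ↦ ?_
        simp [indicator_apply, norm_smul, abs_of_pos (mem_Ioi.1 hr)]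
    _ = ∫⁻ r in Ioi a, ENNReal.ofReal (r ^ (finrank ℝ E - 1)) * f (r • (ω : E)) := by
        have hset : (Ici a ∩ Ioi 0 : Set ℝ) =ᵐ[volume] Ioi a := by
          have := (Ioi_ae_eq_Ici (a := a) (μ := volume)).symm.inter
            (ae_eq_refl (Ioi (0 : ℝ)))
          rwa [Ioi_inter_Ioi, max_eq_left ha] at this
        rw [setLIntegral_indicator measurableSet_Ici, setLIntegral_congr hset]

end Polar

section RadialDeriv

variable {E : Type*} [NormedAddCommGroup E] [NormedSpace ℝ E] {u : E → ℝ} {β a s : ℝ}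

/-- The radial derivative `∂ᵣu`, that is, the derivative of `u` at `x` in the direction `x / ‖x‖`.
At `x = 0`, where this direction is undefined, its value is `0`. -/
def radialDeriv (u : E → ℝ) (x : E) : ℝ :=
  fderiv ℝ u x (‖x‖⁻¹ • x)

lemma radialDeriv_smul {r : ℝ} (hr : 0 < r) {ω : E} (hω : ‖ω‖ = 1) :
    radialDeriv u (r • ω) = fderiv ℝ u (r • ω) ω := by
  rw [radialDeriv, norm_smul, hω, mul_one, Real.norm_of_nonneg hr.le, inv_smul_smul₀ hr.ne']

lemma abs_radialDeriv_le (u : E → ℝ) (x : E) : |radialDeriv u x| ≤ ‖fderiv ℝ u x‖ := by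
  refine (fderiv ℝ u x).le_of_opNorm_le_of_le le_rfl ?_ |>.trans_eq (mul_one _)
  rw [norm_smul, norm_inv, norm_norm]
  exact inv_mul_le_one

lemma measurable_radialDeriv [MeasurableSpace E] [BorelSpace E] (hu : ContDiff ℝ 1 u) :
    Measurable (radialDeriv u) := by
  have hd : Continuous fun x ↦ fderiv ℝ u x x :=
    (hu.continuous_fderiv one_ne_zero).clm_apply continuous_id
  have heq : radialDeriv u = fun x ↦ ‖x‖⁻¹ * fderiv ℝ u x x :=
    funext fun x ↦ by rw [radialDeriv, map_smul, smul_eq_mul]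
  rw [heq]
  exact measurable_norm.inv.mul hd.measurable

lemma hasDerivAt_comp_smul_const (hu : Differentiable ℝ u) (ω : E) (r : ℝ) :
    HasDerivAt (fun r : ℝ ↦ u (r • ω)) (fderiv ℝ u (r • ω) ω) r := by
  have hray : HasDerivAt (fun r : ℝ ↦ r • ω) ω r := by
    simpa using (hasDerivAt_id r).smul_const ω
  exact (hu (r • ω)).hasFDerivAt.comp_hasDerivAt r hray

lemma eventually_smul_eq_zero_of_hasCompactSupport (hu : HasCompactSupport u) {ω : E}
    (hω : ω ≠ 0) : ∀ᶠ r : ℝ in atTop, u (r • ω) = 0 := by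
  have hray : Tendsto (fun r : ℝ ↦ r • ω) atTop (cocompact E) := by
    refine tendsto_cocompact_of_tendsto_dist_comp_atTop 0 ?_
    simpa only [dist_zero_right, norm_smul] using
      tendsto_norm_atTop_atTop.atTop_mul_const (norm_pos_iff.2 hω)
  filter_upwards [hray.eventually hu.isCompact.compl_mem_cocompact] with r hr
  exact image_eq_zero_of_notMem_tsupport hr

lemma setLIntegral_ray_sq_mul_rpow_le_radialDeriv (hβ : 1 < β) (ha : 0 ≤ a) (hs : 0 < s + a)
    (hu : ContDiff ℝ 1 u) (hcs : HasCompactSupport u) (n : ℕ) {ω : E} (hω : ‖ω‖ = 1) :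
    ∫⁻ r in Ioi a, ENNReal.ofReal (r ^ n) *
        ENNReal.ofReal (u (r • ω) ^ 2 * (s + ‖r • ω‖) ^ (β - 2)) ≤
      ENNReal.ofReal ((2 / (β - 1)) ^ 2) * ∫⁻ r in Ioi a, ENNReal.ofReal (r ^ n) *
        ENNReal.ofReal (radialDeriv u (r • ω) ^ 2 * (s + ‖r • ω‖) ^ β) := by
  have hω0 : ω ≠ 0 := norm_ne_zero_iff.1 (hω.trans_ne one_ne_zero)
  have hderiv_cont : Continuous fun r : ℝ ↦ fderiv ℝ u (r • ω) ω :=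
    ((hu.continuous_fderiv one_ne_zero).comp (by fun_prop)).clm_apply continuous_const
  have hardy := setLIntegral_Ioi_mul_sq_mul_add_rpow_le hβ hs (ρ := (· ^ n))
    (fun r _ ↦ hasDerivAt_pow n r) (by fun_prop) (fun r hr ↦ pow_nonneg (ha.trans hr) n)
    (fun r hr ↦ mul_nonneg n.cast_nonneg (pow_nonneg (ha.trans hr) _))
    (fun r _ ↦ hasDerivAt_comp_smul_const (hu.differentiable one_ne_zero) ω r)
    hderiv_cont.continuousOn (eventually_smul_eq_zero_of_hasCompactSupport hcs hω0)
  have hnorm (r : ℝ) (hr : 0 < r) : ‖r • ω‖ = r := by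
    rw [norm_smul, hω, mul_one, Real.norm_of_nonneg hr.le]
  convert hardy using 1
  · refine setLIntegral_congr_fun measurableSet_Ioi fun r hr ↦ ?_
    have hr0 : 0 < r := ha.trans_lt hr
    simp only [hnorm r hr0, ← ENNReal.ofReal_mul (pow_nonneg hr0.le n)]
  · congr 1
    refine setLIntegral_congr_fun measurableSet_Ioi fun r hr ↦ ?_
    have hr0 : 0 < r := ha.trans_lt hr
    simp only [hnorm r hr0, radialDeriv_smul hr0 hω, ← ENNReal.ofReal_mul (pow_nonneg hr0.le n)]

lemma integrableOn_radialDeriv_sq_mul_add_norm_rpow [MeasurableSpace E] [BorelSpace E]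
    (μ : Measure E) [IsFiniteMeasureOnCompacts μ] (hs : 0 < s + a) (p : ℝ)
    (hu : ContDiff ℝ 1 u) (hcs : HasCompactSupport u) :
    IntegrableOn (fun x ↦ radialDeriv u x ^ 2 * (s + ‖x‖) ^ p) {x | a ≤ ‖x‖} μ := by
  have hdu_meas : Measurable (radialDeriv u) := measurable_radialDeriv hu
  have hdu_cont : Continuous (fderiv ℝ u) := hu.continuous_fderiv one_ne_zero
  have hweight_cont : Continuous fun x : E ↦ (s + max a ‖x‖) ^ p :=
    (by fun_prop : Continuous fun x : E ↦ s + max a ‖x‖).rpow_const fun x ↦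
      Or.inl (by linarith [le_max_left a ‖x‖])
  have hmajorant_supp : HasCompactSupport fun x ↦ ‖fderiv ℝ u x‖ ^ 2 * (s + max a ‖x‖) ^ p :=
    (hcs.fderiv ℝ).mono fun x hx hdu ↦ hx (by simp [hdu])
  have hmajorant : Integrable (fun x ↦ ‖fderiv ℝ u x‖ ^ 2 * (s + max a ‖x‖) ^ p) μ :=
    ((hdu_cont.norm.pow 2).mul hweight_cont).integrable_of_hasCompactSupport hmajorant_supp
  refine hmajorant.integrableOn.mono'
    (by fun_prop : Measurable fun x ↦ radialDeriv u x ^ 2 * (s + ‖x‖) ^ p).aestronglyMeasurable ?_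
  filter_upwards [ae_restrict_mem (measurableSet_le measurable_const measurable_norm)] with x hx
  have hweight : 0 ≤ (s + ‖x‖) ^ p := Real.rpow_nonneg (by linarith [mem_ofPred.1 hx]) p
  rw [Real.norm_of_nonneg (by positivity), max_eq_right hx]
  gcongr ?_ * _
  exact sq_le_sq.2 ((abs_radialDeriv_le u x).trans_eq (abs_norm _).symm)

end RadialDeriv

section Hardy

variable {E : Type*} [NormedAddCommGroup E] [NormedSpace ℝ E] [FiniteDimensional ℝ E]
  [MeasurableSpace E] [BorelSpace E] (μ : Measure E) [μ.IsAddHaarMeasure]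
  {β a s : ℝ} {u : E → ℝ}

lemma setLIntegral_norm_ge_sq_mul_rpow_le_radialDeriv [Nontrivial E] (hβ : 1 < β) (ha : 0 ≤ a)
    (hs : 0 < s + a) (hu : ContDiff ℝ 1 u) (hcs : HasCompactSupport u) :
    ∫⁻ x in {x | a ≤ ‖x‖}, ENNReal.ofReal (u x ^ 2 * (s + ‖x‖) ^ (β - 2)) ∂μ ≤
      ENNReal.ofReal ((2 / (β - 1)) ^ 2) *
        ∫⁻ x in {x | a ≤ ‖x‖}, ENNReal.ofReal (radialDeriv u x ^ 2 * (s + ‖x‖) ^ β) ∂μ := by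
  have hu_meas : Measurable u := hu.continuous.measurable
  have hdu_meas : Measurable (radialDeriv u) := measurable_radialDeriv hu
  rw [setLIntegral_norm_ge_eq_lintegral_toSphere_lintegral_Ioi μ (by fun_prop) ha,
    setLIntegral_norm_ge_eq_lintegral_toSphere_lintegral_Ioi μ (by fun_prop) ha,
    ← lintegral_const_mul' _ _ ENNReal.ofReal_ne_top]
  exact lintegral_mono fun ω ↦
    setLIntegral_ray_sq_mul_rpow_le_radialDeriv hβ ha hs hu hcs _ (norm_eq_of_mem_sphere ω)

theorem stmt13_general [Nontrivial E] (hβ : 1 < β) (ha : 0 ≤ a) (hs : 0 < s + a)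
    (hu : ContDiff ℝ 1 u) (hcs : HasCompactSupport u) :
    ∫ x in {x | a ≤ ‖x‖}, u x ^ 2 * (s + ‖x‖) ^ (β - 2) ∂μ ≤
      (2 / (β - 1)) ^ 2 *
        ∫ x in {x | a ≤ ‖x‖}, radialDeriv u x ^ 2 * (s + ‖x‖) ^ β ∂μ := by
  have hu_meas : Measurable u := hu.continuous.measurable
  have hnonneg (f : E → ℝ) (p : ℝ) :
      0 ≤ᵐ[μ.restrict {x | a ≤ ‖x‖}] fun x ↦ f x ^ 2 * (s + ‖x‖) ^ p := by
    filter_upwards [ae_restrict_mem (measurableSet_le measurable_const measurable_norm)] with x hx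
    exact mul_nonneg (sq_nonneg _) (Real.rpow_nonneg (by linarith [mem_ofPred.1 hx]) p)
  have hint := integrableOn_radialDeriv_sq_mul_add_norm_rpow μ hs β hu hcs
  have hrhs : 0 ≤ ∫ x in {x | a ≤ ‖x‖}, radialDeriv u x ^ 2 * (s + ‖x‖) ^ β ∂μ :=
    integral_nonneg_of_ae (hnonneg _ β)
  rw [integral_eq_lintegral_of_nonneg_ae (hnonneg u (β - 2)) (by fun_prop)]
  refine ENNReal.toReal_le_of_le_ofReal (by positivity) ?_
  rw [ENNReal.ofReal_mul (sq_nonneg _), ofReal_integral_eq_lintegral_ofReal hint (hnonneg _ β)]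
  exact setLIntegral_norm_ge_sq_mul_rpow_le_radialDeriv μ hβ ha hs hu hcs

end Hardy

section Plane

lemma radialDeriv_comp_re_im (u : ℝ × ℝ → ℝ) (z : ℂ) :
    radialDeriv (fun z : ℂ ↦ u (z.re, z.im)) z =
      (z.re * fderiv ℝ u (z.re, z.im) (1, 0) + z.im * fderiv ℝ u (z.re, z.im) (0, 1)) / ‖z‖ := by
  have hz : ((z.re, z.im) : ℝ × ℝ) = z.re • (1, 0) + z.im • (0, 1) := by simp
  have hfderiv : fderiv ℝ (fun z : ℂ ↦ u (z.re, z.im)) z z =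
      fderiv ℝ u (z.re, z.im) (z.re, z.im) :=
    DFunLike.congr_fun (Complex.equivRealProdCLM.comp_right_fderiv (f := u) (x := z)) z
  rw [radialDeriv, map_smul, hfderiv]
  nth_rw 2 [hz]
  rw [map_add, map_smul, map_smul, smul_eq_mul, smul_eq_mul, smul_eq_mul, inv_mul_eq_div]

lemma setIntegral_prod_eq_setIntegral_complex (f : ℝ × ℝ → ℝ) (S : Set (ℝ × ℝ)) :
    ∫ x in S, f x = ∫ z in {z : ℂ | (z.re, z.im) ∈ S}, f (z.re, z.im) :=
  (Complex.volume_preserving_equiv_real_prod.setIntegral_preimage_emb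
    Complex.measurableEquivRealProd.measurableEmbedding f S).symm

end Plane

/-- Exterior-region weighted Hardy inequality (estimate `(har1)` in the proof of the
weighted Hardy inequality of the paper); the constant is uniform in `t`. -/
theorem stmt13 (β : ℝ) (hβ : 1 < β) :
    ∃ C : ℝ, 0 < C ∧
      ∀ t : ℝ, 0 ≤ t → ∀ u : ℝ × ℝ → ℝ, ContDiff ℝ 1 u → HasCompactSupport u →
        ∫ x in {x : ℝ × ℝ | t ≤ Real.sqrt (x.1^2 + x.2^2)},
            (u x)^2 * (1 + Real.sqrt (x.1^2 + x.2^2) - t) ^ (β - 2)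
          ≤ C * ∫ x in {x : ℝ × ℝ | t ≤ Real.sqrt (x.1^2 + x.2^2)},
              ((x.1 * fderiv ℝ u x (1, 0) + x.2 * fderiv ℝ u x (0, 1))
                  / Real.sqrt (x.1^2 + x.2^2))^2
                * (1 + Real.sqrt (x.1^2 + x.2^2) - t) ^ β := by
  refine ⟨(2 / (β - 1)) ^ 2, pow_pos (div_pos two_pos (sub_pos.2 hβ)) 2, fun t ht u hu hcs ↦ ?_⟩
  simpa only [setIntegral_prod_eq_setIntegral_complex, mem_ofPred_eq, add_sub_right_comm,
    ← Complex.norm_eq_sqrt_sq_add_sq, ← radialDeriv_comp_re_im] using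
    stmt13_general volume (u := fun z : ℂ ↦ u (z.re, z.im)) hβ ht (s := 1 - t) (by linarith)
      (hu.comp Complex.equivRealProdCLM.contDiff)
      (hcs.comp_homeomorph Complex.equivRealProdCLM.toHomeomorph)
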